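/- Let I = [0,1] be parameterized by β ∈ (0,ω') and define, for fixed x real, S(x,β) = ζ(x + iω' + iβ) − ζ(x + iω') − ζ(iβ), where ζ is the Weierstrass zeta function on a rectangular lattice with real half-period ω and imaginary half-period iω'. Then S(x,β) = (1/2)·(℘'(x+iω') − ℘'(iβ))/(℘(x+iω') − ℘(iβ)), the quantities ℘(x+iω') − ℘(iβ) and ℘'(x+iω') are real, Re ℘'(iβ) = 0, and hence sign(Im S(x,β)) = −sign(Im ℘'(iβ)) · sign(℘(x+iω') − ℘(iβ)). -/

import Mathlib

/-!
Up to reindexing the sums, `wP`, `wP'` and `wZeta` are the functions `℘`, `℘'` and `ζ` of the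
period pair `(2ω, 2iω')`, so the work takes place on a general period pair `L`, using the theory
of `℘` in Mathlib.

*Addition formula.* Fix `α` outside the lattice. The function
`2 (ζ(z + α) - ζ(z) - ζ(α)) (℘(z) - ℘(α)) - (℘'(z) - ℘'(α))` of `z` is elliptic, since the
quasi-periods of `ζ` cancel. Its only possible poles are at `0` and `-α` modulo the lattice. It
tends to `0` at both: at `0` because
`ζ(z + α) - ζ(α) = -℘(α) z - ℘'(α) z² / 2 + o(z²)` and the principal parts of `ζ`, `℘`, `℘'` are
explicit, at `-α` because the simple pole of `ζ(z + α)` meets a zero of `℘(z) - ℘(α)`. Hence it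
extends to a bounded entire function with a zero, which vanishes by Liouville's theorem
(`zetaL_addition`).

*The denominator does not vanish.* Suppose `℘(z) = ℘(α)` with `z`, `z + α`, `z - α` outside the
lattice. The formula at `α` and at `-α` gives `℘'(z) = ℘'(α) = -℘'(α)`, so `℘'(α) = 0`, and
`u = ℘ - ℘(α)` satisfies `u' = E u` near `z` with `E` analytic and `u(z) = 0`. Comparing orders of
vanishing, `u` vanishes near `z`, so `℘` is constant, contradicting its pole at the origin
(`weierstrassP_ne`).

*Reality and sign.* A rectangular lattice is stable under conjugation, so `℘` and `℘'` commute with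
it. The conjugate of `z = x + iω'` is `z - 2iω'` and that of `α = iβ` is `-α`; periodicity and parity
make `℘(z)`, `℘(α)`, `℘'(z)` real and `℘'(α)` purely imaginary. Taking imaginary parts in the formula
gives `Im S = -Im ℘'(α) / (2 (℘(z) - ℘(α)))`, whence the sign.
-/


open Complex

/-- A point of the rectangular lattice generated by `2ω` and `2iω'`. -/
noncomputable def latticePoint (ω ω' : ℝ) (p : ℤ × ℤ) : ℂ :=
  2 * (p.1 : ℂ) * (ω : ℂ) + 2 * (p.2 : ℂ) * (ω' : ℂ) * Complex.I

/-- `z` belongs to the lattice generated by `2ω` and `2iω'`. -/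
def inLattice (ω ω' : ℝ) (z : ℂ) : Prop := ∃ p : ℤ × ℤ, z = latticePoint ω ω' p

/-- The Weierstrass elliptic function `℘` on the rectangular lattice with
half-periods `ω` and `iω'`. -/
noncomputable def wP (ω ω' : ℝ) (z : ℂ) : ℂ :=
  1 / z ^ 2 + ∑' p : {p : ℤ × ℤ // p ≠ 0},
    (1 / (z - latticePoint ω ω' p.1) ^ 2 - 1 / latticePoint ω ω' p.1 ^ 2)

/-- The derivative `℘'` of the Weierstrass elliptic function. -/
noncomputable def wP' (ω ω' : ℝ) : ℂ → ℂ := deriv (wP ω ω')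

/-- The Weierstrass zeta function `ζ` (odd, with `ζ' = −℘`). -/
noncomputable def wZeta (ω ω' : ℝ) (z : ℂ) : ℂ :=
  1 / z + ∑' p : {p : ℤ × ℤ // p ≠ 0},
    (1 / (z - latticePoint ω ω' p.1) + 1 / latticePoint ω ω' p.1 +
      z / latticePoint ω ω' p.1 ^ 2)

/-- The Weierstrass sigma function `σ`. -/
noncomputable def wSigma (ω ω' : ℝ) (z : ℂ) : ℂ :=
  z * ∏' p : {p : ℤ × ℤ // p ≠ 0},
    ((1 - z / latticePoint ω ω' p.1) *
      Complex.exp (z / latticePoint ω ω' p.1 + z ^ 2 / (2 * latticePoint ω ω' p.1 ^ 2)))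

/-- The lattice invariant `g₂`. -/
noncomputable def wg2 (ω ω' : ℝ) : ℂ :=
  60 * ∑' p : {p : ℤ × ℤ // p ≠ 0}, 1 / latticePoint ω ω' p.1 ^ 4

/-- The lattice invariant `g₃`. -/
noncomputable def wg3 (ω ω' : ℝ) : ℂ :=
  140 * ∑' p : {p : ℤ × ℤ // p ≠ 0}, 1 / latticePoint ω ω' p.1 ^ 6

open Filter Topology

/-! ### The zeta function of a period pair -/

/-- The Weierstrass zeta function of `L` with the summand `1 / z` at `l = 0` removed. -/
noncomputable def zetaReg (L : PeriodPair) (z : ℂ) : ℂ :=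
  ∑' l : L.lattice, if l.1 = 0 then 0 else (1 / (z - l) + 1 / l.1 + z / l.1 ^ 2)

/-- The Weierstrass zeta function of `L`. -/
noncomputable def zetaL (L : PeriodPair) (z : ℂ) : ℂ := zetaReg L z + 1 / z

/-- The three-term summand equals `s² / (l² (s - l))`, hence decays like `‖l‖⁻³`. -/
lemma zeta_summand_bound (r : ℝ) (hr : 0 < r) (s l : ℂ) (hs : ‖s‖ < r) (h : 2 * r ≤ ‖l‖) :
    ‖1 / (s - l) + 1 / l + s / l ^ 2‖ ≤ 2 * r ^ 2 * ‖l‖ ^ (-3 : ℝ) := by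
  have h1 : 0 < ‖l‖ := by linarith
  have hl : l ≠ 0 := norm_pos_iff.mp h1
  have h2 : ‖l‖ / 2 ≤ ‖s - l‖ := by
    rw [norm_sub_rev]
    exact .trans (by linarith) (norm_sub_norm_le l s)
  have hsl : s - l ≠ 0 := norm_pos_iff.mp (by linarith)
  have e : 1 / (s - l) + 1 / l + s / l ^ 2 = s ^ 2 / (l ^ 2 * (s - l)) := by
    field_simp
    ring
  calc ‖1 / (s - l) + 1 / l + s / l ^ 2‖ = ‖s‖ ^ 2 / (‖l‖ ^ 2 * ‖s - l‖) := by
        rw [e]; simp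
    _ ≤ r ^ 2 / (‖l‖ ^ 2 * (‖l‖ / 2)) := by gcongr
    _ = 2 * r ^ 2 / ‖l‖ ^ 3 := by field
    _ = _ := by norm_cast

lemma hasSumLocallyUniformly_zetaReg (L : PeriodPair) :
    HasSumLocallyUniformly
      (fun (l : L.lattice) (z : ℂ) ↦
        if l.1 = 0 then 0 else (1 / (z - l) + 1 / l.1 + z / l.1 ^ 2)) (zetaReg L) := by
  refine L.hasSumLocallyUniformly_aux (u := (2 * · ^ 2 * ‖·‖ ^ (-3 : ℝ))) _
    (fun _ _ ↦ (ZLattice.summable_norm_rpow _ _ (by simp; norm_num)).mul_left _) fun r hr ↦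
    Filter.eventually_atTop.mpr ⟨2 * r, ?_⟩
  rintro _ h s hs l rfl
  split_ifs
  · rw [norm_zero]
    positivity
  · exact zeta_summand_bound r hr s l hs h

lemma zeta_summand_hasDerivAt (l z : ℂ) (h : z ≠ l) :
    HasDerivAt (fun z : ℂ ↦ 1 / (z - l) + 1 / l + z / l ^ 2)
      (-(1 / (z - l) ^ 2 - 1 / l ^ 2)) z := by
  have h' : z - l ≠ 0 := sub_ne_zero.mpr h
  have h1 := (((hasDerivAt_id z).sub_const l).inv h').add_const (1 / l)
  have h2 := h1.add ((hasDerivAt_id z).div_const (l ^ 2))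
  refine (h2.congr_deriv ?_).congr_of_eventuallyEq ?_
  · simp; ring
  · exact Eventually.of_forall fun w ↦ by simp

lemma zetaReg_hasDerivAt (L : PeriodPair) (z : ℂ) (hz : z ∉ (L.lattice : Set ℂ) \ {0}) :
    HasDerivAt (zetaReg L) (-L.weierstrassPExcept 0 z) z := by
  let f : L.lattice → ℂ → ℂ :=
    fun l z ↦ if l.1 = 0 then 0 else (1 / (z - l) + 1 / l.1 + z / l.1 ^ 2)
  let g : L.lattice → ℂ → ℂ :=
    fun l z ↦ if l.1 = 0 then 0 else (1 / (z - l) ^ 2 - 1 / l.1 ^ 2)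
  have hf : HasSumLocallyUniformly f (zetaReg L) := hasSumLocallyUniformly_zetaReg L
  have hg : HasSumLocallyUniformly g (L.weierstrassPExcept 0) :=
    L.hasSumLocallyUniformly_weierstrassPExcept 0
  have hterm : ∀ (l : L.lattice) (w : ℂ), w ∈ ((L.lattice : Set ℂ) \ {0})ᶜ →
      HasDerivAt (f l) (-g l w) w := by
    intro l w hw
    by_cases h : l.1 = 0
    · simpa only [f, g, h, if_true, neg_zero] using hasDerivAt_const w (0 : ℂ)
    · simpa only [f, g, h, if_false] using
        zeta_summand_hasDerivAt _ _ (by rintro rfl; exact hw ⟨l.2, h⟩)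
  clear_value f g
  have hopen : IsOpen ((L.lattice : Set ℂ) \ {0})ᶜ := L.isOpen_compl_lattice_sdiff
  refine hasDerivAt_of_tendstoLocallyUniformlyOn (f := fun s w ↦ ∑ l ∈ s, f l w)
    (f' := fun s w ↦ -∑ l ∈ s, g l w)
    (g' := fun w ↦ -L.weierstrassPExcept 0 w) hopen hg.tendstoLocallyUniformlyOn.fun_neg
    (Eventually.of_forall fun s w hw ↦ ?_) (fun w _ ↦ hf.hasSum) hz
  rw [← Finset.sum_neg_distrib]
  exact HasDerivAt.fun_sum fun l _ ↦ hterm l w hw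

lemma zetaReg_zero (L : PeriodPair) : zetaReg L 0 = 0 := by
  unfold zetaReg
  rw [← tsum_zero (β := L.lattice)]
  congr 1 with l
  split_ifs <;> simp

lemma weierstrassP_eq (L : PeriodPair) (z : ℂ) :
    L.weierstrassP z = L.weierstrassPExcept 0 z + 1 / z ^ 2 := by
  simpa using (L.weierstrassPExcept_add 0 z).symm

lemma derivWeierstrassP_eq (L : PeriodPair) (z : ℂ) :
    L.derivWeierstrassP z = L.derivWeierstrassPExcept 0 z - 2 / z ^ 3 := by
  simpa using (L.derivWeierstrassPExcept_sub 0 z).symm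

lemma zetaL_hasDerivAt (L : PeriodPair) (z : ℂ) (hz : z ∉ L.lattice) :
    HasDerivAt (zetaL L) (-L.weierstrassP z) z := by
  have h0 : z ≠ 0 := by rintro rfl; exact hz (zero_mem _)
  have h1 := (zetaReg_hasDerivAt L z fun h ↦ hz h.1).add (hasDerivAt_inv h0)
  refine (h1.congr_deriv ?_).congr_of_eventuallyEq ?_
  · rw [weierstrassP_eq]; simp; ring
  · exact Eventually.of_forall fun w ↦ by simp [zetaL]

lemma weierstrassP_hasDerivAt (L : PeriodPair) (z : ℂ) (hz : z ∉ L.lattice) :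
    HasDerivAt L.weierstrassP (L.derivWeierstrassP z) z := by
  rw [← L.deriv_weierstrassP]
  exact (L.analyticOnNhd_weierstrassP z hz).differentiableAt.hasDerivAt

lemma isPreconnected_compl_lattice (L : PeriodPair) :
    IsPreconnected ((L.lattice : Set ℂ)ᶜ) :=
  (Set.Countable.isConnected_compl_of_one_lt_rank (by simp)
    (countable_of_Lindelof_of_discrete (X := L.lattice))).2

/-- Quasi-periodicity: the increment of `ζ` along a period does not depend on the base point. -/
lemma zetaL_add_coe_sub (L : PeriodPair) (l : L.lattice) (z w : ℂ) (hz : z ∉ L.lattice)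
    (hw : w ∉ L.lattice) : zetaL L (z + l) - zetaL L z = zetaL L (w + l) - zetaL L w := by
  have hd : ∀ x ∈ (L.lattice : Set ℂ)ᶜ,
      HasDerivAt (fun x ↦ zetaL L (x + l) - zetaL L x) 0 x := by
    intro x hx
    have hx' : x + l ∉ L.lattice := fun h ↦ hx ((L.lattice.add_mem_iff_left l.2).mp h)
    have := ((zetaL_hasDerivAt L _ hx').comp_add_const x l.1).fun_sub (zetaL_hasDerivAt L x hx)
    simpa using this
  exact L.isClosed_lattice.isOpen_compl.is_const_of_deriv_eq_zero
    (isPreconnected_compl_lattice L)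
    (fun x hx ↦ (hd x hx).differentiableAt.differentiableWithinAt)
    (fun x hx ↦ (hd x hx).deriv) hz hw

/-! ### The addition formula for `ζ` -/

/-- If `f 0 = 0` and `f' z = o(z)`, then `f z = o(z ^ 2)`. -/
lemma tendsto_div_sq {f g : ℂ → ℂ} (hf : ∀ᶠ z in 𝓝 0, HasDerivAt f (g z) z) (h0 : f 0 = 0)
    (hg : g =o[𝓝 0] (fun z ↦ z)) : Tendsto (fun z ↦ f z / z ^ 2) (𝓝[≠] 0) (𝓝 0) := by
  have : f =o[𝓝 0] (fun z ↦ z ^ 2) := by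
    refine Asymptotics.isLittleO_iff.mpr fun ε hε ↦ ?_
    obtain ⟨r, hr, hb⟩ := Metric.eventually_nhds_iff_ball.mp
      (hf.and (Asymptotics.isLittleO_iff.mp hg hε))
    filter_upwards [Metric.ball_mem_nhds 0 hr] with z hz
    have hsub : Metric.closedBall (0 : ℂ) ‖z‖ ⊆ Metric.ball 0 r :=
      Metric.closedBall_subset_ball (by simpa using hz)
    have := (convex_closedBall (0 : ℂ) ‖z‖).norm_image_sub_le_of_norm_hasDerivWithin_le
      (f := f) (f' := g) (C := ε * ‖z‖)
      (fun x hx ↦ (hb x (hsub hx)).1.hasDerivWithinAt)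
      (fun x hx ↦ ((hb x (hsub hx)).2).trans (by
        gcongr; simpa using hx)) (x := 0) (y := z) (by simp) (by simp)
    simpa [h0, pow_two, mul_assoc] using this
  exact this.tendsto_div_nhds_zero.mono_left nhdsWithin_le_nhds


/-- The difference of the two sides of the addition formula, cleared of denominators. -/
noncomputable def addDefect (L : PeriodPair) (α z : ℂ) : ℂ :=
  2 * (zetaL L (z + α) - zetaL L z - zetaL L α) * (L.weierstrassP z - L.weierstrassP α)
    - (L.derivWeierstrassP z - L.derivWeierstrassP α)

lemma addDefect_add_coe (L : PeriodPair) (α z : ℂ) (l : L.lattice) (hz : z ∉ L.lattice)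
    (hzα : z + α ∉ L.lattice) : addDefect L α (z + l) = addDefect L α z := by
  have h := zetaL_add_coe_sub L l (z + α) z hzα hz
  have e : zetaL L (z + l + α) - zetaL L (z + l) = zetaL L (z + α) - zetaL L z := by
    rw [add_right_comm]
    linear_combination h
  simp only [addDefect, L.weierstrassP_add_coe, L.derivWeierstrassP_add_coe, e]

lemma addDefect_differentiableAt (L : PeriodPair) (α z : ℂ) (hz : z ∉ L.lattice)
    (hzα : z + α ∉ L.lattice) : DifferentiableAt ℂ (addDefect L α) z := by
  have h1 : DifferentiableAt ℂ (fun z ↦ zetaL L (z + α)) z :=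
    ((zetaL_hasDerivAt L _ hzα).comp_add_const z α).differentiableAt
  have h2 := (zetaL_hasDerivAt L z hz).differentiableAt
  have h3 := (weierstrassP_hasDerivAt L z hz).differentiableAt
  have h4 := (L.analyticOnNhd_derivWeierstrassP z hz).differentiableAt
  unfold addDefect
  fun_prop

lemma weierstrassPExcept_hasDerivAt_zero (L : PeriodPair) :
    HasDerivAt (L.weierstrassPExcept 0) 0 0 := by
  have := (L.analyticAt_weierstrassPExcept 0).differentiableAt.hasDerivAt
  rwa [L.deriv_weierstrassPExcept_same, L.derivWeierstrassPExcept_zero_zero] at this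

/-- The principal parts of `ζ`, `℘` and `℘'` cancel at the origin. -/
lemma addDefect_tendsto_zero (L : PeriodPair) (α : ℂ) (hα : α ∉ L.lattice) :
    Tendsto (addDefect L α) (𝓝[≠] 0) (𝓝 0) := by
  set p := L.weierstrassP α with hp
  set p' := L.derivWeierstrassP α with hp'
  let P := L.weierstrassPExcept 0
  let Q := L.derivWeierstrassPExcept 0
  -- `H` is the regular part of `ζ(z + α) - ζ(z) - ζ(α)`, corrected so that `H z = o(z ^ 2)`.
  let H : ℂ → ℂ := fun z ↦ zetaL L (z + α) - zetaL L α + p * z + p' / 2 * z ^ 2 - zetaReg L z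
  let g : ℂ → ℂ := fun z ↦ -L.weierstrassP (z + α) + p + p' * z + P z
  have hnear : ∀ᶠ z in 𝓝 (0 : ℂ), z + α ∉ L.lattice := by
    have : ContinuousAt (fun z : ℂ ↦ z + α) 0 := by fun_prop
    exact this.eventually_mem (L.isClosed_lattice.isOpen_compl.mem_nhds (by simpa using hα))
  have hH : ∀ᶠ z in 𝓝 0, HasDerivAt H (g z) z := by
    filter_upwards [hnear, L.compl_lattice_sdiff_singleton_mem_nhds 0] with z h1 h2
    have d1 := ((zetaL_hasDerivAt L _ h1).comp_add_const z α).sub_const (zetaL L α)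
    have d2 := d1.fun_add ((hasDerivAt_id' z).const_mul p)
    have d3 := d2.fun_add ((hasDerivAt_pow 2 z).const_mul (p' / 2))
    refine (d3.fun_sub (zetaReg_hasDerivAt L z h2)).congr_deriv ?_
    simp [g, P]; ring
  have hP0 : HasDerivAt P 0 0 := weierstrassPExcept_hasDerivAt_zero L
  have hPz : P 0 = 0 := L.weierstrassPExcept_zero 0
  have hg : g =o[𝓝 0] (fun z ↦ z) := by
    have hα' : (0 : ℂ) + α ∉ L.lattice := by simpa using hα
    have d1 := ((weierstrassP_hasDerivAt L _ hα').comp_add_const 0 α).fun_neg.add_const p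
    have d2 := (d1.fun_add ((hasDerivAt_id' (0 : ℂ)).const_mul p')).fun_add hP0
    have := d2.isLittleO
    simpa [← hp, ← hp', hPz] using this
  have hlim := tendsto_div_sq hH (by simp [H, zetaReg_zero]) hg
  have hPlim : Tendsto (fun z ↦ P z / z) (𝓝[≠] 0) (𝓝 0) := by
    have := hP0.isLittleO
    simp only [hPz, sub_zero, smul_zero] at this
    exact this.tendsto_div_nhds_zero.mono_left nhdsWithin_le_nhds
  have hQlim : Tendsto Q (𝓝[≠] 0) (𝓝 0) := by
    have := (L.analyticAt_derivWeierstrassPExcept 0).continuousAt.tendsto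
    rw [L.derivWeierstrassPExcept_zero_zero] at this
    exact this.mono_left nhdsWithin_le_nhds
  have hPc : Tendsto P (𝓝[≠] 0) (𝓝 0) := by
    have := hP0.continuousAt.tendsto
    rw [hPz] at this
    exact this.mono_left nhdsWithin_le_nhds
  have hHc : Tendsto H (𝓝[≠] 0) (𝓝 0) := by
    have := hH.self_of_nhds.continuousAt.tendsto
    rw [show H 0 = 0 by simp [H, zetaReg_zero]] at this
    exact this.mono_left nhdsWithin_le_nhds
  have hid : Tendsto (fun z : ℂ ↦ z) (𝓝[≠] 0) (𝓝 0) := nhdsWithin_le_nhds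
  have total : Tendsto (fun z ↦ 2 * (H z - p * z - p' / 2 * z ^ 2) * (P z - p) + 2 * (H z / z ^ 2)
      - 2 * (P z / z) - Q z) (𝓝[≠] 0)
      (𝓝 (2 * (0 - p * 0 - p' / 2 * 0 ^ 2) * (0 - p) + 2 * 0 - 2 * 0 - 0)) :=
    ((((((hHc.sub (hid.const_mul p)).sub ((hid.pow 2).const_mul (p' / 2))).const_mul 2).mul
      (hPc.sub_const p)).add (hlim.const_mul 2)).sub (hPlim.const_mul 2)).sub hQlim
  refine Tendsto.congr' ?_ (by simpa using total)
  filter_upwards [self_mem_nhdsWithin] with z hz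
  have hz : z ≠ 0 := hz
  simp only [addDefect, weierstrassP_eq L z, derivWeierstrassP_eq L z, ← hp, ← hp', H]
  change _ = 2 * _ * (P z + 1 / z ^ 2 - p) - (Q z - 2 / z ^ 3 - p')
  rw [show zetaL L z = zetaReg L z + 1 / z from rfl]
  field_simp
  ring

/-- At `-α` the simple pole of `ζ(z + α)` meets the zero of `℘(z) - ℘(α)`. -/
lemma addDefect_tendsto_neg (L : PeriodPair) (α : ℂ) (hα : α ∉ L.lattice) :
    Tendsto (fun w ↦ addDefect L α (w - α)) (𝓝[≠] 0) (𝓝 0) := by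
  set p := L.weierstrassP α with hp
  set p' := L.derivWeierstrassP α with hp'
  have hα' : 0 + -α ∉ L.lattice := by simpa using hα
  have d1 := (zetaL_hasDerivAt L _ hα').comp_add_const 0 (-α)
  have d2 := (weierstrassP_hasDerivAt L _ hα').comp_add_const 0 (-α)
  have d3 : DifferentiableAt ℂ (fun w ↦ L.derivWeierstrassP (w + -α)) 0 :=
    ((L.analyticOnNhd_derivWeierstrassP _ hα').differentiableAt.hasDerivAt.comp_add_const 0
      (-α)).differentiableAt
  have d4 := zetaReg_hasDerivAt L 0 (by simp)
  have hu : L.weierstrassP (0 + -α) = p := by simp [hp]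
  have hu0 : L.weierstrassP (0 - α) = p := by simp [hp]
  have hu' : L.derivWeierstrassP (0 + -α) = -p' := by simp [hp']
  have l1 := d1.continuousAt.tendsto.mono_left (nhdsWithin_le_nhds (s := {0}ᶜ))
  have l2 := d2.continuousAt.tendsto.mono_left (nhdsWithin_le_nhds (s := {0}ᶜ))
  have l3 := d3.continuousAt.tendsto.mono_left (nhdsWithin_le_nhds (s := {0}ᶜ))
  have l4 := d4.continuousAt.tendsto.mono_left (nhdsWithin_le_nhds (s := {0}ᶜ))
  have l5 := d2.tendsto_slope
  rw [hu'] at l5 l3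
  rw [hu] at l2
  rw [zetaReg_zero] at l4
  have total := (((((l4.sub l1).sub_const (zetaL L α)).const_mul 2).mul
    (l2.sub_const p)).add (l5.const_mul 2)).sub (l3.sub_const p')
  refine Tendsto.congr' ?_ (total.trans_eq ?_)
  · filter_upwards [self_mem_nhdsWithin] with z hz
    have hz : z ≠ 0 := hz
    simp only [addDefect, slope, hu0, ← hp, ← hp', ← sub_eq_add_neg, sub_add_cancel,
      show zetaL L z = zetaReg L z + 1 / z from rfl, vsub_eq_sub, smul_eq_mul, sub_zero]
    field_simp
    ring
  · congr 1
    ring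

open Classical in
/-- `addDefect` extended by `0` across its singularities, the lattice points and their translates
by `-α`. -/
noncomputable def addDefectExt (L : PeriodPair) (α z : ℂ) : ℂ :=
  if z ∈ L.lattice ∨ z + α ∈ L.lattice then 0 else addDefect L α z

lemma addDefectExt_add_coe (L : PeriodPair) (α z : ℂ) (l : L.lattice) :
    addDefectExt L α (z + l) = addDefectExt L α z := by
  have h1 : z + l ∈ L.lattice ↔ z ∈ L.lattice := L.lattice.add_mem_iff_left l.2
  have h2 : z + l + α ∈ L.lattice ↔ z + α ∈ L.lattice := by
    rw [add_right_comm]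
    exact L.lattice.add_mem_iff_left l.2
  unfold addDefectExt
  rw [h1, h2]
  split_ifs with h
  · rfl
  · push Not at h
    exact addDefect_add_coe L α z l h.1 h.2

/-- The points where `addDefect` is regular. -/
lemma isOpen_addDefect_regular (L : PeriodPair) (α : ℂ) :
    IsOpen {z : ℂ | z ∉ L.lattice ∧ z + α ∉ L.lattice} :=
  L.isClosed_lattice.isOpen_compl.inter
    (L.isClosed_lattice.isOpen_compl.preimage (continuous_add_const α))

lemma addDefectExt_differentiableAt_of_regular (L : PeriodPair) (α z : ℂ) (hz : z ∉ L.lattice)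
    (hzα : z + α ∉ L.lattice) : DifferentiableAt ℂ (addDefectExt L α) z := by
  refine (addDefect_differentiableAt L α z hz hzα).congr_of_eventuallyEq ?_
  filter_upwards [(isOpen_addDefect_regular L α).mem_nhds ⟨hz, hzα⟩] with w hw
  simp [addDefectExt, hw.1, hw.2]

lemma eventually_regular (L : PeriodPair) (α c : ℂ) :
    ∀ᶠ z in 𝓝[≠] c, z ∉ L.lattice ∧ z + α ∉ L.lattice := by
  have h1 := L.compl_lattice_sdiff_singleton_mem_nhds c
  have h2 : ∀ᶠ z in 𝓝 c, z + α ∈ ((L.lattice : Set ℂ) \ {c + α})ᶜ :=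
    (continuous_add_const α).continuousAt.eventually_mem
      (L.compl_lattice_sdiff_singleton_mem_nhds (c + α))
  filter_upwards [nhdsWithin_le_nhds h1, nhdsWithin_le_nhds h2, self_mem_nhdsWithin]
    with z h1 h2 h3
  have h3 : z ≠ c := h3
  exact ⟨fun h ↦ h1 ⟨h, h3⟩, fun h ↦ h2 ⟨h, fun e ↦ h3 (add_right_cancel e)⟩⟩

lemma addDefectExt_differentiableAt_of_tendsto (L : PeriodPair) (α c : ℂ)
    (hc : addDefectExt L α c = 0) (h : Tendsto (addDefect L α) (𝓝[≠] c) (𝓝 0)) :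
    DifferentiableAt ℂ (addDefectExt L α) c := by
  refine (analyticAt_of_differentiable_on_punctured_nhds_of_continuousAt ?_ ?_).differentiableAt
  · filter_upwards [eventually_regular L α c] with z hz
    exact addDefectExt_differentiableAt_of_regular L α z hz.1 hz.2
  · rw [continuousAt_iff_punctured_nhds, hc]
    refine h.congr' ?_
    filter_upwards [eventually_regular L α c] with z hz
    simp [addDefectExt, hz.1, hz.2]

lemma addDefectExt_differentiable (L : PeriodPair) (α : ℂ) (hα : α ∉ L.lattice) :
    Differentiable ℂ (addDefectExt L α) := by
  have h0 : DifferentiableAt ℂ (addDefectExt L α) 0 :=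
    addDefectExt_differentiableAt_of_tendsto L α 0 (by simp [addDefectExt])
      (addDefect_tendsto_zero L α hα)
  have h1 : DifferentiableAt ℂ (addDefectExt L α) (-α) := by
    refine addDefectExt_differentiableAt_of_tendsto L α (-α) (by simp [addDefectExt]) ?_
    have hmap : Tendsto (fun z : ℂ ↦ z + α) (𝓝[≠] (-α)) (𝓝[≠] 0) := by
      refine tendsto_nhdsWithin_iff.mpr ⟨?_, ?_⟩
      · have : Tendsto (fun z : ℂ ↦ z + α) (𝓝 (-α)) (𝓝 (-α + α)) :=
          (continuous_add_const α).tendsto _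
        rw [neg_add_cancel] at this
        exact this.mono_left nhdsWithin_le_nhds
      · filter_upwards [self_mem_nhdsWithin] with z hz h
        exact hz (eq_neg_of_add_eq_zero_left h)
    simpa [Function.comp_def] using (addDefect_tendsto_neg L α hα).comp hmap
  -- periodicity moves differentiability from `c` to `c + l`
  have hper : ∀ (c : ℂ) (l : L.lattice), DifferentiableAt ℂ (addDefectExt L α) c →
      DifferentiableAt ℂ (addDefectExt L α) (c + l) := by
    intro c l h
    have e : addDefectExt L α = fun z ↦ addDefectExt L α (z + -l.1) :=
      funext fun z ↦ (addDefectExt_add_coe L α z (-l)).symm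
    have hc : c + l + -l.1 = c := by ring
    rw [e]
    rw [← hc] at h
    exact (h.hasDerivAt.comp_add_const (c + l) (-l.1)).differentiableAt
  intro z
  by_cases hz : z ∈ L.lattice
  · simpa using hper 0 ⟨z, hz⟩ h0
  by_cases hzα : z + α ∈ L.lattice
  · simpa using hper (-α) ⟨z + α, hzα⟩ h1
  exact addDefectExt_differentiableAt_of_regular L α z hz hzα

/-- The addition formula for `ζ`, cleared of denominators. -/
lemma zetaL_addition (L : PeriodPair) (α z : ℂ) (hα : α ∉ L.lattice) (hz : z ∉ L.lattice)
    (hzα : z + α ∉ L.lattice) :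
    2 * (zetaL L (z + α) - zetaL L z - zetaL L α) * (L.weierstrassP z - L.weierstrassP α)
      = L.derivWeierstrassP z - L.derivWeierstrassP α := by
  have hd := addDefectExt_differentiable L α hα
  have hb := (IsZLattice.isCompact_range_of_periodic L.lattice _ hd.continuous fun z w hw ↦ by
    lift w to L.lattice using hw
    exact addDefectExt_add_coe L α z w).isBounded
  have h := hd.apply_eq_apply_of_bounded hb z 0
  have h0 : addDefectExt L α 0 = 0 := by simp [addDefectExt]
  rw [h0, addDefectExt, if_neg (by simp [hz, hzα])] at h
  exact sub_eq_zero.mp h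

/-! ### Coincidences between values of `℘` -/

/-- `℘` is not constant near any point off the lattice, having a pole at the origin. -/
lemma weierstrassP_not_eventually_const (L : PeriodPair) (z c : ℂ) (hz : z ∉ L.lattice) :
    ¬ ∀ᶠ w in 𝓝 z, L.weierstrassP w = c := by
  intro h
  have heq : Set.EqOn L.weierstrassP (fun _ ↦ c) (L.lattice : Set ℂ)ᶜ :=
    L.analyticOnNhd_weierstrassP.eqOn_of_preconnected_of_eventuallyEq analyticOnNhd_const
      (isPreconnected_compl_lattice L) hz h
  have hev : L.weierstrassP =ᶠ[𝓝[≠] 0] fun _ ↦ c := by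
    filter_upwards [eventually_regular L 0 0] with w hw using heq hw.1
  have h1 := L.order_weierstrassP 0 (zero_mem _)
  rw [meromorphicOrderAt_congr hev] at h1
  have h2 : 0 ≤ meromorphicOrderAt (fun _ : ℂ ↦ c) 0 := analyticAt_const.meromorphicOrderAt_nonneg
  rw [h1] at h2
  exact absurd h2 (by decide)

/-- A function `u` with `u' = E * u` near one of its zeros vanishes near that zero. -/
lemma eventually_zero_of_deriv_eq_mul {u E : ℂ → ℂ} {z : ℂ} (hu : AnalyticAt ℂ u z)
    (hE : AnalyticAt ℂ E z) (h0 : u z = 0) (h : ∀ᶠ w in 𝓝 z, deriv u w = E w * u w) :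
    ∀ᶠ w in 𝓝 z, u w = 0 := by
  have h1 : analyticOrderAt (deriv u) z = analyticOrderAt E z + analyticOrderAt u z :=
    (analyticOrderAt_congr h).trans (analyticOrderAt_mul hE hu)
  have h2 := hu.analyticOrderAt_deriv_add_one
  simp only [h0, sub_zero] at h2
  rw [h1] at h2
  -- a finite order `n` would satisfy `n = e + n + 1`
  by_contra hne
  have hfin : analyticOrderAt u z ≠ ⊤ := fun e ↦ hne (analyticOrderAt_eq_top.mp e)
  generalize analyticOrderAt u z = n at *
  generalize analyticOrderAt E z = e at *
  lift n to ℕ using hfin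
  induction e using ENat.recTopCoe with
  | top => simp at h2
  | coe e => norm_cast at h2; omega

/-- `℘` takes the same value at two points only if they agree up to sign modulo the lattice. -/
lemma weierstrassP_ne (L : PeriodPair) (α z : ℂ) (hα : α ∉ L.lattice) (hz : z ∉ L.lattice)
    (hzα : z + α ∉ L.lattice) (hzα' : z - α ∉ L.lattice) :
    L.weierstrassP z ≠ L.weierstrassP α := by
  intro heq
  have h1 := zetaL_addition L α z hα hz hzα
  have h2 := zetaL_addition L (-α) z (by simpa using hα) hz (by simpa [← sub_eq_add_neg] using hzα')
  simp only [L.weierstrassP_neg, L.derivWeierstrassP_neg, heq, sub_self, mul_zero] at h1 h2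
  have hα0 : L.derivWeierstrassP α = 0 := by linear_combination (h1 - h2) / 2
  refine weierstrassP_not_eventually_const L z (L.weierstrassP α) hz ?_
  have hE : AnalyticAt ℂ (fun w ↦ 2 * (zetaL L (w + α) - zetaL L w - zetaL L α)) z := by
    refine DifferentiableOn.analyticAt (fun w hw ↦ ?_)
      ((isOpen_addDefect_regular L α).mem_nhds ⟨hz, hzα⟩)
    exact ((((zetaL_hasDerivAt L _ hw.2).comp_add_const w α).fun_sub
      (zetaL_hasDerivAt L w hw.1)).sub_const (zetaL L α)).differentiableAt.const_mul 2
      |>.differentiableWithinAt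
  have := eventually_zero_of_deriv_eq_mul (u := fun w ↦ L.weierstrassP w - L.weierstrassP α)
    ((L.analyticOnNhd_weierstrassP z hz).sub analyticAt_const) hE (by simp [heq]) ?_
  · simpa [sub_eq_zero] using this
  · filter_upwards [(isOpen_addDefect_regular L α).mem_nhds ⟨hz, hzα⟩] with w hw
    rw [zetaL_addition L α w hα hw.1 hw.2, hα0, sub_zero,
      deriv_sub_const, L.deriv_weierstrassP]

/-! ### Rectangular lattices -/

/-- The period pair `(2ω, 2iω')`. -/
noncomputable def rectPair (ω ω' : ℝ) (hω : 0 < ω) (hω' : 0 < ω') : PeriodPair where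
  ω₁ := 2 * ω
  ω₂ := 2 * ω' * I
  indep := by
    refine LinearIndependent.pair_iff.mpr fun s t h ↦ ?_
    have h1 := congrArg Complex.re h
    have h2 := congrArg Complex.im h
    simp [hω.ne', hω'.ne'] at h1 h2
    exact ⟨h1, h2⟩

section Rect

variable (ω ω' : ℝ) (hω : 0 < ω) (hω' : 0 < ω')

lemma latticeEquivProd_symm_rect (p : ℤ × ℤ) :
    ((rectPair ω ω' hω hω').latticeEquivProd.symm p).1 = latticePoint ω ω' p := by
  rw [PeriodPair.latticeEquiv_symm_apply]
  simp only [rectPair, latticePoint]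
  ring

lemma mem_rect_lattice (z : ℂ) :
    z ∈ (rectPair ω ω' hω hω').lattice ↔ ∃ p : ℤ × ℤ, latticePoint ω ω' p = z := by
  simp only [← latticeEquivProd_symm_rect ω ω' hω hω']
  constructor
  · intro h
    exact ⟨(rectPair ω ω' hω hω').latticeEquivProd ⟨z, h⟩, by simp⟩
  · rintro ⟨p, rfl⟩
    exact Subtype.prop _

lemma tsum_rect (F : ℂ → ℂ) :
    ∑' l : (rectPair ω ω' hω hω').lattice, (if l.1 = 0 then 0 else F l) =
      ∑' p : {p : ℤ × ℤ // p ≠ 0}, F (latticePoint ω ω' p.1) := by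
  rw [← (rectPair ω ω' hω hω').latticeEquivProd.symm.toEquiv.tsum_eq]
  refine Eq.trans ?_ (tsum_subtype {p : ℤ × ℤ | p ≠ 0} fun p ↦ F (latticePoint ω ω' p)).symm
  congr 1 with p
  simp only [LinearEquiv.coe_toEquiv, Set.indicator, Set.mem_ofPred_eq,
    ← latticeEquivProd_symm_rect ω ω' hω hω', ZeroMemClass.coe_eq_zero,
    EmbeddingLike.map_eq_zero_iff]
  split_ifs <;> simp_all

lemma wP_eq : wP ω ω' = (rectPair ω ω' hω hω').weierstrassP := by
  ext z
  rw [weierstrassP_eq, add_comm]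
  simp only [wP, PeriodPair.weierstrassPExcept]
  rw [tsum_rect ω ω' hω hω' fun l ↦ 1 / (z - l) ^ 2 - 1 / l ^ 2]

lemma wP'_eq : wP' ω ω' = (rectPair ω ω' hω hω').derivWeierstrassP := by
  rw [wP', wP_eq ω ω' hω hω', PeriodPair.deriv_weierstrassP]

lemma wZeta_eq : wZeta ω ω' = zetaL (rectPair ω ω' hω hω') := by
  ext z
  simp only [wZeta, zetaL, zetaReg]
  rw [tsum_rect ω ω' hω hω' fun l ↦ 1 / (z - l) + 1 / l + z / l ^ 2, add_comm]

open scoped ComplexConjugate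

lemma conj_mem_rect {z : ℂ} (hz : z ∈ (rectPair ω ω' hω hω').lattice) :
    conj z ∈ (rectPair ω ω' hω hω').lattice := by
  rw [mem_rect_lattice] at hz ⊢
  obtain ⟨p, rfl⟩ := hz
  exact ⟨(p.1, -p.2), by simp [latticePoint, map_ofNat]⟩

/-- Complex conjugation as a permutation of the rectangular lattice. -/
noncomputable def conjPerm : Equiv.Perm (rectPair ω ω' hω hω').lattice :=
  Function.Involutive.toPerm (fun l ↦ ⟨conj l.1, conj_mem_rect ω ω' hω hω' l.2⟩)
    fun l ↦ Subtype.ext (by simp)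

lemma conjPerm_coe (l : (rectPair ω ω' hω hω').lattice) :
    (conjPerm ω ω' hω hω' l : ℂ) = conj l.1 := rfl

lemma weierstrassP_conj (z : ℂ) : (rectPair ω ω' hω hω').weierstrassP (conj z) =
    conj ((rectPair ω ω' hω hω').weierstrassP z) := by
  simp only [PeriodPair.weierstrassP]
  rw [← (conjPerm ω ω' hω hω').tsum_eq, Complex.conj_tsum]
  congr 1 with l
  simp [conjPerm_coe]

lemma derivWeierstrassP_conj (z : ℂ) : (rectPair ω ω' hω hω').derivWeierstrassP (conj z) =
    conj ((rectPair ω ω' hω hω').derivWeierstrassP z) := by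
  simp only [PeriodPair.derivWeierstrassP]
  rw [← (conjPerm ω ω' hω hω').tsum_eq, map_neg, Complex.conj_tsum]
  congr 2 with l
  simp [conjPerm_coe, map_ofNat]

end Rect

/-- A lattice point has imaginary part `2 n ω'`. -/
lemma notMem_rect_of_im (ω ω' : ℝ) (hω : 0 < ω) (hω' : 0 < ω') (z : ℂ) (k : ℤ)
    (h1 : 2 * k * ω' < z.im) (h2 : z.im < 2 * (k + 1) * ω') :
    z ∉ (rectPair ω ω' hω hω').lattice := by
  rw [mem_rect_lattice]
  rintro ⟨p, rfl⟩
  have e : (latticePoint ω ω' p).im = 2 * p.2 * ω' := by simp [latticePoint]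
  rw [e] at h1 h2
  have h3 : (k : ℝ) < p.2 := by
    by_contra! h
    nlinarith
  have h4 : (p.2 : ℝ) < k + 1 := by
    by_contra! h
    nlinarith
  norm_cast at h3 h4
  omega

/-! ### The sign of the zeta combination -/

/-- For `x ∈ ℝ`, `β ∈ (0,ω')`, and `S(x,β) = ζ(x+iω'+iβ) − ζ(x+iω') − ζ(iβ)` on the
rectangular lattice with half-periods `ω`, `iω'`:
`S = (1/2)(℘'(x+iω') − ℘'(iβ))/(℘(x+iω') − ℘(iβ))`, the quantities
`℘(x+iω') − ℘(iβ)` and `℘'(x+iω')` are real, `Re ℘'(iβ) = 0`, and hence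
`sign(Im S) = −sign(Im ℘'(iβ)) · sign(℘(x+iω') − ℘(iβ))`. -/
theorem zeta_combination_sign (ω ω' : ℝ) (hω : 0 < ω) (hω' : 0 < ω')
    (x β : ℝ) (hβ : β ∈ Set.Ioo 0 ω') :
    let z : ℂ := (x : ℂ) + (ω' : ℂ) * Complex.I
    let α : ℂ := (β : ℂ) * Complex.I
    let S : ℂ := wZeta ω ω' (z + α) - wZeta ω ω' z - wZeta ω ω' α
    S = (1 / 2) * (wP' ω ω' z - wP' ω ω' α) / (wP ω ω' z - wP ω ω' α) ∧
    (wP ω ω' z - wP ω ω' α).im = 0 ∧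
    (wP' ω ω' z).im = 0 ∧
    (wP' ω ω' α).re = 0 ∧
    Real.sign S.im =
      -Real.sign (wP' ω ω' α).im * Real.sign (wP ω ω' z - wP ω ω' α).re := by
  intro z α S
  obtain ⟨hβ0, hβ1⟩ := hβ
  set L := rectPair ω ω' hω hω' with hL
  have hα : α ∉ L.lattice :=
    notMem_rect_of_im _ _ _ _ _ 0 (by simpa [α] using hβ0) (by simp [α]; linarith)
  have hz : z ∉ L.lattice :=
    notMem_rect_of_im _ _ _ _ _ 0 (by simpa [z] using hω') (by simp [z]; linarith)
  have hzα : z + α ∉ L.lattice :=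
    notMem_rect_of_im _ _ _ _ _ 0 (by simp [z, α]; linarith) (by simp [z, α]; linarith)
  have hzα' : z - α ∉ L.lattice :=
    notMem_rect_of_im _ _ _ _ _ 0 (by simp [z, α]; linarith) (by simp [z, α]; linarith)
  have hne : wP ω ω' z - wP ω ω' α ≠ 0 := by
    rw [wP_eq ω ω' hω hω']
    exact sub_ne_zero.mpr (weierstrassP_ne L α z hα hz hzα hzα')
  have hS : S = (1 / 2) * (wP' ω ω' z - wP' ω ω' α) / (wP ω ω' z - wP ω ω' α) := by
    rw [eq_div_iff hne]
    have := zetaL_addition L α z hα hz hzα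
    simp only [S, wP_eq ω ω' hω hω', wP'_eq ω ω' hω hω', wZeta_eq ω ω' hω hω']
    linear_combination this / 2
  -- `conj z` differs from `z` by the period `2iω'`, and `conj α = -α`
  let l : L.lattice := ⟨2 * ω' * I, L.ω₂_mem_lattice⟩
  have hcz : (starRingEnd ℂ) z = z - l := by
    simp only [z, l, map_add, map_mul, conj_ofReal, conj_I]
    ring
  have hcα : (starRingEnd ℂ) α = -α := by simp [α]
  have r1 : (wP ω ω' z).im = 0 := by
    rw [wP_eq ω ω' hω hω', ← conj_eq_iff_im, ← weierstrassP_conj, hcz, L.weierstrassP_sub_coe]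
  have r2 : (wP ω ω' α).im = 0 := by
    rw [wP_eq ω ω' hω hω', ← conj_eq_iff_im, ← weierstrassP_conj, hcα, L.weierstrassP_neg]
  have r3 : (wP' ω ω' z).im = 0 := by
    rw [wP'_eq ω ω' hω hω', ← conj_eq_iff_im, ← derivWeierstrassP_conj, hcz,
      L.derivWeierstrassP_sub_coe]
  have r4 : (wP' ω ω' α).re = 0 := by
    have h := derivWeierstrassP_conj ω ω' hω hω' α
    rw [hcα, ← hL, L.derivWeierstrassP_neg] at h
    have h' := congrArg Complex.re h
    rw [conj_re, neg_re] at h'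
    rw [wP'_eq ω ω' hω hω']
    linarith
  have r5 : (wP ω ω' z - wP ω ω' α).im = 0 := by rw [sub_im, r1, r2, sub_zero]
  refine ⟨hS, r5, r3, r4, ?_⟩
  have hSim : S.im = -(wP' ω ω' α).im / (2 * (wP ω ω' z - wP ω ω' α).re) := by
    have hd : wP ω ω' z - wP ω ω' α = ((wP ω ω' z - wP ω ω' α).re : ℂ) :=
      Complex.ext (ofReal_re _).symm (by rw [r5, ofReal_im])
    have h2 : (1 / 2 : ℂ) = ((1 / 2 : ℝ) : ℂ) := by norm_num
    rw [hS, hd, div_ofReal_im, h2, im_ofReal_mul, sub_im, r3, ofReal_re]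
    ring
  rw [hSim]
  have hd0 : (wP ω ω' z - wP ω ω' α).re ≠ 0 := fun h ↦ hne (Complex.ext h r5)
  generalize (wP ω ω' z - wP ω ω' α).re = d at hd0
  generalize (wP' ω ω' α).im = b
  rcases hd0.lt_or_gt with hd | hd <;> rcases lt_trichotomy b 0 with hb | hb | hb
  · rw [Real.sign_of_neg hb, Real.sign_of_neg hd,
      Real.sign_of_neg (div_neg_of_pos_of_neg (by linarith) (by linarith))]
    norm_num
  · simp [hb]
  · rw [Real.sign_of_pos hb, Real.sign_of_neg hd,
      Real.sign_of_pos (div_pos_of_neg_of_neg (by linarith) (by linarith))]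
    norm_num
  · rw [Real.sign_of_neg hb, Real.sign_of_pos hd,
      Real.sign_of_pos (div_pos (by linarith) (by linarith))]
    norm_num
  · simp [hb]
  · rw [Real.sign_of_pos hb, Real.sign_of_pos hd,
      Real.sign_of_neg (div_neg_of_neg_of_pos (by linarith) (by linarith))]
    norm_num
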